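/- There exists an absolute constant C₁ > 0 with the following property. Let n ≥ 2 be real, α ≥ 1, and let B = [x₀, x₀+αt] × [t/n, t] be a box of type (n, α) in the upper half-plane, with reflection B̄ = [x₀, x₀+αt] × [−t, −t/n]. If μ₁ and μ₂ are measurable functions on ℂ, each vanishing outside the lower half-plane {Im ζ < 0} with |μᵢ| ≤ 1 a.e. (i = 1, 2), and μ₁ = μ₂ a.e. on B̄, then | ⨍_B (2 Im(z)|Tμ₁(z)|)² dA(z)/Im z − ⨍_B (2 Im(z)|Tμ₂(z)|)² dA(z)/Im z | ≤ C₁/log n. -/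

import Mathlib

open Complex MeasureTheory Filter Topology Set

/-- The derivative of the Beurling transform of `μ`:
`Tμ(z) = -(2/π) ∫_{Im ζ < 0} μ(ζ)/(ζ−z)³ dA(ζ)`. -/
noncomputable def Tderiv (μ : ℂ → ℂ) (z : ℂ) : ℂ :=
  -(2 / (Real.pi : ℂ)) * ∫ ζ in {ζ : ℂ | ζ.im < 0}, μ ζ / (ζ - z)^3

/-- The modified Beurling transform
`S^#μ(z) = -(1/π) ∫_{Im ζ<0} μ(ζ)[(ζ−z)⁻² − ζ⁻²] dA(ζ)`. -/
noncomputable def Ssharp (μ : ℂ → ℂ) (z : ℂ) : ℂ :=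
  -(1 / (Real.pi : ℂ)) * ∫ ζ in {ζ : ℂ | ζ.im < 0}, μ ζ * (((ζ - z)^2)⁻¹ - (ζ^2)⁻¹)

/-- The asymptotic variance over `[0,1]` of a function on the upper half-plane:
`σ²_{[0,1]}(b) = limsup_{y→0⁺} (1/log(1/y)) ∫₀¹ |b(x+iy)|² dx`. -/
noncomputable def sigma01 (b : ℂ → ℂ) : ℝ :=
  Filter.limsup (fun y : ℝ =>
    (1 / Real.log (1 / y)) *
      ∫ x in (0:ℝ)..1, ‖b ((x : ℂ) + (y : ℂ) * Complex.I)‖^2) (𝓝[>] (0:ℝ))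

/-- `Σ²_ℍ`: the supremum of `σ²_{[0,1]}(S^#μ)` over all measurable `μ` with
`|μ| ≤ 1` a.e. supported in the lower half-plane. -/
noncomputable def SigmaSqH : ℝ :=
  sSup {v : ℝ | ∃ μ : ℂ → ℂ, Measurable μ ∧ (∀ᵐ ζ : ℂ, ‖μ ζ‖ ≤ 1) ∧
    (∀ ζ : ℂ, 0 ≤ ζ.im → μ ζ = 0) ∧ v = sigma01 (Ssharp μ)}

lemma aux_integrable_cauchy (c h : ℝ) (hh : 0 < h) :
    Integrable (fun u : ℝ => 1 / ((u - c)^2 + h^2)) ∧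
    ∫ u : ℝ, 1 / ((u - c)^2 + h^2) = Real.pi / h := by
  have e : (fun u : ℝ => 1 / ((u - c)^2 + h^2)) =
      fun u => (fun w : ℝ => (h^2)⁻¹ * (1 + (w / h)^2)⁻¹) (u - c) := by
    funext u
    have : 0 < (u - c)^2 + h^2 := by positivity
    field_simp
    ring
  have i0 : Integrable (fun w : ℝ => (h^2)⁻¹ * (1 + (w / h)^2)⁻¹) :=
    (integrable_inv_one_add_sq.comp_div hh.ne').const_mul _
  rw [e]
  refine ⟨i0.comp_sub_right c, ?_⟩
  rw [integral_sub_right_eq_self (fun w : ℝ => (h^2)⁻¹ * (1 + (w / h)^2)⁻¹) c,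
    integral_const_mul, Measure.integral_comp_div (fun w : ℝ => (1 + w^2)⁻¹) h,
    integral_univ_inv_one_add_sq, abs_of_pos hh, smul_eq_mul]
  field_simp

lemma aux_lint_cauchy (A c h : ℝ) (hA : 0 ≤ A) (hh : 0 < h) :
    ∫⁻ u : ℝ, ENNReal.ofReal (A / ((u - c)^2 + h^2)) = ENNReal.ofReal (A * Real.pi / h) := by
  obtain ⟨h1, h2⟩ := aux_integrable_cauchy c h hh
  have e : (fun u : ℝ => A / ((u - c)^2 + h^2)) = fun u => A * (1 / ((u - c)^2 + h^2)) := by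
    funext u; ring
  have h3 := h1.const_mul A
  rw [← e] at h3
  rw [← ofReal_integral_eq_lintegral_ofReal h3 (Eventually.of_forall fun u => by positivity)]
  rw [e, integral_const_mul, h2, mul_div_assoc]

/-- real plane kernel -/
noncomputable def kerR (x y : ℝ) (p : ℝ × ℝ) : ENNReal :=
  ENNReal.ofReal (1 / (Real.sqrt ((p.1 - x)^2 + (p.2 - y)^2))^3)

lemma kerR_meas (x y : ℝ) : Measurable (kerR x y) := by
  unfold kerR
  fun_prop

lemma kerR_inner (x y v : ℝ) (hv : v ≠ y) :
    ∫⁻ u : ℝ, kerR x y (u, v) ≤ ENNReal.ofReal (Real.pi / (v - y)^2) := by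
  have hh : 0 < |v - y| := abs_pos.mpr (sub_ne_zero.mpr hv)
  have := aux_lint_cauchy (1 / |v - y|) x |v - y| (by positivity) hh
  have e : 1 / |v - y| * Real.pi / |v - y| = Real.pi / (v - y)^2 := by
    rw [← sq_abs (v - y)]; field_simp
  rw [e] at this
  rw [← this]
  refine lintegral_mono fun u => ?_
  unfold kerR
  refine ENNReal.ofReal_le_ofReal ?_
  simp only [sq_abs]
  have p1 : 0 < (u - x)^2 + (v - y)^2 := by
    have : 0 < (v - y)^2 := by rw [← sq_abs]; positivity
    positivity
  have p2 : |v - y| ≤ Real.sqrt ((u - x)^2 + (v - y)^2) :=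
    Real.abs_le_sqrt (by nlinarith [sq_nonneg (u - x)])
  rw [div_div]
  apply one_div_le_one_div_of_le (by positivity)
  rw [pow_succ (Real.sqrt _) 2, Real.sq_sqrt p1.le, mul_comm]
  gcongr

lemma kerR_strip (x y : ℝ) (S : Set ℝ) (hS : MeasurableSet S) (hy : ∀ v ∈ S, v ≠ y) :
    ∫⁻ p in (univ ×ˢ S), kerR x y p ≤ ∫⁻ v in S, ENNReal.ofReal (Real.pi / (v - y)^2) := by
  rw [Measure.volume_eq_prod, ← Measure.prod_restrict, lintegral_prod_symm' _ (kerR_meas x y)]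
  refine setLIntegral_mono' hS fun v hv => ?_
  rw [Measure.restrict_univ]
  exact kerR_inner x y v (hy v hv)

lemma kerR_far (x y d : ℝ) (hd : 0 < d) :
    ∫⁻ p in (univ ×ˢ {v : ℝ | d ≤ |v - y|}), kerR x y p ≤ ENNReal.ofReal (2 * Real.pi^2 / d) := by
  have hS : MeasurableSet {v : ℝ | d ≤ |v - y|} := measurableSet_le (by fun_prop) (by fun_prop)
  refine (kerR_strip x y _ hS ?_).trans ?_
  · rintro v hv rfl
    simp at hv; linarith
  · have := aux_lint_cauchy (2 * Real.pi) y d (by positivity) hd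
    rw [show 2 * Real.pi * Real.pi / d = 2 * Real.pi^2 / d by ring] at this
    rw [← this]
    refine (setLIntegral_mono' hS fun v hv => ?_).trans (setLIntegral_le_lintegral _ _)
    refine ENNReal.ofReal_le_ofReal ?_
    have h1 : d^2 ≤ (v - y)^2 := by
      rw [← sq_abs (v - y)]; gcongr; exact hv
    have h2 : 0 < (v - y)^2 := lt_of_lt_of_le (by positivity) h1
    rw [div_le_div_iff₀ h2 (by positivity)]
    nlinarith [Real.pi_pos]

lemma kerR_thin (x y s : ℝ) (hy : 0 < y) :
    ∫⁻ p in (univ ×ˢ (Ioo (-s) 0)), kerR x y p ≤ ENNReal.ofReal (Real.pi * s / y^2) := by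
  refine (kerR_strip x y _ measurableSet_Ioo ?_).trans ?_
  · rintro v hv rfl
    linarith [hv.2]
  · calc _ ≤ ∫⁻ v in Ioo (-s) 0, ENNReal.ofReal (Real.pi / y^2) := by
          refine setLIntegral_mono' measurableSet_Ioo fun v hv => ?_
          refine ENNReal.ofReal_le_ofReal ?_
          gcongr Real.pi / ?_
          nlinarith [hv.2]
      _ = _ := by
          rw [setLIntegral_const, Real.volume_Ioo, ← ENNReal.ofReal_mul (by positivity)]
          congr 1; ring

noncomputable def kerC (z ζ : ℂ) : ENNReal := ENNReal.ofReal (1 / ‖ζ - z‖^3)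

lemma kerC_eq (z ζ : ℂ) : kerC z ζ = kerR z.re z.im (Complex.measurableEquivRealProd ζ) := by
  unfold kerC kerR
  rw [Complex.norm_eq_sqrt_sq_add_sq]
  simp [Complex.measurableEquivRealProd_apply]

lemma kerC_meas (z : ℂ) : Measurable (kerC z) := by
  unfold kerC; fun_prop

lemma kerC_set (z : ℂ) (S : Set (ℝ × ℝ)) :
    ∫⁻ ζ in Complex.measurableEquivRealProd ⁻¹' S, kerC z ζ = ∫⁻ p in S, kerR z.re z.im p := by
  simp_rw [kerC_eq]
  exact Complex.volume_preserving_equiv_real_prod.setLIntegral_comp_preimage_emb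
    Complex.measurableEquivRealProd.measurableEmbedding _ _

lemma kerC_far_im (z : ℂ) (d : ℝ) (hd : 0 < d) (S : Set ℂ) (hS : ∀ ζ ∈ S, d ≤ |ζ.im - z.im|) :
    ∫⁻ ζ in S, kerC z ζ ≤ ENNReal.ofReal (2 * Real.pi^2 / d) := by
  refine le_trans ?_ (kerR_far z.re z.im d hd)
  rw [← kerC_set]
  refine lintegral_mono_set fun ζ hζ => ?_
  simpa [Complex.measurableEquivRealProd_apply] using hS ζ hζ

lemma kerC_thin (z : ℂ) (s : ℝ) (hz : 0 < z.im) (S : Set ℂ)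
    (hS : ∀ ζ ∈ S, -s < ζ.im ∧ ζ.im < 0) :
    ∫⁻ ζ in S, kerC z ζ ≤ ENNReal.ofReal (Real.pi * s / z.im^2) := by
  refine le_trans ?_ (kerR_thin z.re z.im s hz)
  rw [← kerC_set]
  refine lintegral_mono_set fun ζ hζ => ?_
  simpa [Complex.measurableEquivRealProd_apply] using hS ζ hζ

lemma kerC_far_re (z : ℂ) (d : ℝ) (hd : 0 < d) (S : Set ℂ) (hS : ∀ ζ ∈ S, d ≤ |ζ.re - z.re|) :
    ∫⁻ ζ in S, kerC z ζ ≤ ENNReal.ofReal (2 * Real.pi^2 / d) := by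
  refine le_trans ?_ (kerR_far z.im z.re d hd)
  have hs : ∀ p, kerR z.im z.re p = kerR z.re z.im p.swap := by
    intro p; simp [kerR, add_comm]
  have h2 := (Measure.measurePreserving_swap (μ := (volume : Measure ℝ)) (ν := (volume : Measure ℝ))).setLIntegral_comp_preimage_emb
    (MeasurableEquiv.prodComm (α := ℝ) (β := ℝ)).measurableEmbedding (kerR z.re z.im)
    ({v : ℝ | d ≤ |v - z.re|} ×ˢ univ)
  simp_rw [hs]
  have e : (univ ×ˢ {v : ℝ | d ≤ |v - z.re|} : Set (ℝ × ℝ)) =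
    Prod.swap ⁻¹' ({v : ℝ | d ≤ |v - z.re|} ×ˢ univ) := by
    ext p; simp
  rw [e, Measure.volume_eq_prod]
  refine le_trans ?_ h2.symm.le
  rw [← Measure.volume_eq_prod, ← kerC_set]
  refine lintegral_mono_set fun ζ hζ => ?_
  simpa [Complex.measurableEquivRealProd_apply] using hS ζ hζ

lemma inv_min_le (a b : ℝ) (ha : 0 < a) (hb : 0 < b) :
    1 / max a b ≤ a ^ (-(1/2) : ℝ) * b ^ (-(1/2) : ℝ) := by
  rw [Real.rpow_neg ha.le, Real.rpow_neg hb.le, ← mul_inv, ← Real.mul_rpow ha.le hb.le,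
    ← Real.sqrt_eq_rpow, ← one_div]
  apply one_div_le_one_div_of_le (by positivity)
  rw [Real.sqrt_le_left (by positivity), sq]
  gcongr
  · exact le_max_left _ _
  · exact le_max_right _ _

noncomputable def Kbd (n x₀ x₁ t x y : ℝ) : ℝ :=
  2 * Real.pi^2 / t + Real.pi * (t / n) / y^2 +
    2 * Real.pi^2 * ((x - x₀) ^ (-(1/2) : ℝ) * y ^ (-(1/2) : ℝ)) +
    2 * Real.pi^2 * ((x₁ - x) ^ (-(1/2) : ℝ) * y ^ (-(1/2) : ℝ))

lemma kerC_side (z : ℂ) (d : ℝ) (hd : 0 < d) (hz : 0 < z.im) (S : Set ℂ)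
    (hS : ∀ ζ ∈ S, d ≤ |ζ.re - z.re|) (hS' : ∀ ζ ∈ S, ζ.im < 0) :
    ∫⁻ ζ in S, kerC z ζ ≤
      ENNReal.ofReal (2 * Real.pi^2 * (d ^ (-(1/2) : ℝ) * z.im ^ (-(1/2) : ℝ))) := by
  have key : ∫⁻ ζ in S, kerC z ζ ≤ ENNReal.ofReal (2 * Real.pi^2 / max d z.im) := by
    rcases le_total d z.im with h | h
    · rw [max_eq_right h]
      refine kerC_far_im z _ hz S fun ζ hζ => ?_
      have := hS' ζ hζ
      rw [abs_sub_comm]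
      exact le_trans (by linarith) (le_abs_self _)
    · rw [max_eq_left h]
      exact kerC_far_re z _ hd S hS
  refine key.trans (ENNReal.ofReal_le_ofReal ?_)
  rw [← mul_one_div]
  gcongr
  exact inv_min_le _ _ hd hz

lemma kerC_E (n x₀ x₁ t : ℝ) (hn : 0 < n) (ht : 0 < t) (z : ℂ) (hz : 0 < z.im)
    (h0 : x₀ < z.re) (h1 : z.re < x₁) :
    ∫⁻ ζ in {ζ : ℂ | ζ.im < 0 ∧ ¬ (ζ.re ∈ Set.Icc x₀ x₁ ∧ ζ.im ∈ Set.Icc (-t) (-(t / n)))},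
      kerC z ζ ≤ ENNReal.ofReal (Kbd n x₀ x₁ t z.re z.im) := by
  have hsub : {ζ : ℂ | ζ.im < 0 ∧ ¬ (ζ.re ∈ Set.Icc x₀ x₁ ∧ ζ.im ∈ Set.Icc (-t) (-(t / n)))} ⊆
      (({ζ : ℂ | ζ.im < -t} ∪ {ζ : ℂ | -(t / n) < ζ.im ∧ ζ.im < 0}) ∪
        {ζ : ℂ | ζ.re < x₀ ∧ ζ.im < 0}) ∪ {ζ : ℂ | x₁ < ζ.re ∧ ζ.im < 0} := by
    rintro ζ ⟨a, b⟩
    simp only [mem_union, Set.mem_ofPred_eq, mem_Icc] at *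
    by_contra hc
    push Not at hc
    obtain ⟨⟨⟨c1, c2⟩, c3⟩, c4⟩ := hc
    apply b
    refine ⟨⟨?_, ?_⟩, c1, ?_⟩
    · by_contra hh; push Not at hh; linarith [c3 hh]
    · by_contra hh; push Not at hh; linarith [c4 hh]
    · by_contra hh; push Not at hh; linarith [c2 hh]
  have p0 : 0 < z.re - x₀ := by linarith
  have p1 : 0 < x₁ - z.re := by linarith
  refine (lintegral_mono_set hsub).trans ?_
  unfold Kbd
  rw [ENNReal.ofReal_add (by positivity) (by positivity),
    ENNReal.ofReal_add (by positivity) (by positivity),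
    ENNReal.ofReal_add (by positivity) (by positivity)]
  refine (lintegral_union_le _ _ _).trans (add_le_add ?_ ?_)
  · refine (lintegral_union_le _ _ _).trans (add_le_add ?_ ?_)
    · refine (lintegral_union_le _ _ _).trans (add_le_add ?_ ?_)
      · refine kerC_far_im z t ht _ fun ζ hζ => ?_
        have : ζ.im < -t := hζ
        rw [abs_sub_comm]
        exact le_trans (by linarith) (le_abs_self _)
      · exact kerC_thin z _ hz _ fun ζ hζ => hζ
    · refine kerC_side z _ p0 hz _ (fun ζ hζ => ?_) fun ζ hζ => hζ.2
      have := hζ.1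
      rw [abs_sub_comm]
      exact le_trans (by linarith) (le_abs_self _)
  · refine kerC_side z _ p1 hz _ (fun ζ hζ => ?_) fun ζ hζ => hζ.2
    have := hζ.1
    exact le_trans (by linarith) (le_abs_self _)

lemma lhp_meas : MeasurableSet {ζ : ℂ | ζ.im < 0} :=
  measurableSet_lt Complex.measurable_im measurable_const

lemma kerC_L (z : ℂ) (hz : 0 < z.im) :
    ∫⁻ ζ in {ζ : ℂ | ζ.im < 0}, kerC z ζ ≤ ENNReal.ofReal (2 * Real.pi^2 / z.im) := by
  refine kerC_far_im z _ hz _ fun ζ hζ => ?_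
  have : ζ.im < 0 := hζ
  rw [abs_sub_comm]
  exact le_trans (by linarith) (le_abs_self _)

lemma enorm_quot (a z ζ : ℂ) (c : ℝ) (hc : 0 ≤ c) (ha : ‖a‖ ≤ c) :
    ENNReal.ofReal ‖a / (ζ - z)^3‖ ≤ ENNReal.ofReal c * kerC z ζ := by
  unfold kerC
  rw [← ENNReal.ofReal_mul hc]
  apply ENNReal.ofReal_le_ofReal
  rw [norm_div, norm_pow, mul_one_div]
  gcongr

lemma quot_lint (μ : ℂ → ℂ) (hb : ∀ᵐ ζ : ℂ, ‖μ ζ‖ ≤ 1) (z : ℂ) (hz : 0 < z.im) :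
    ∫⁻ ζ in {ζ : ℂ | ζ.im < 0}, ENNReal.ofReal ‖μ ζ / (ζ - z)^3‖ ≤
      ENNReal.ofReal (2 * Real.pi^2 / z.im) := by
  refine le_trans (lintegral_mono_ae ?_) (kerC_L z hz)
  filter_upwards [ae_restrict_of_ae hb] with ζ h
  simpa using enorm_quot (μ ζ) z ζ 1 zero_le_one h

lemma quot_integrable (μ : ℂ → ℂ) (hm : Measurable μ) (hb : ∀ᵐ ζ : ℂ, ‖μ ζ‖ ≤ 1) (z : ℂ)
    (hz : 0 < z.im) :
    IntegrableOn (fun ζ => μ ζ / (ζ - z)^3) {ζ : ℂ | ζ.im < 0} := by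
  have hq : Measurable (fun ζ => μ ζ / (ζ - z)^3) := by fun_prop
  refine ⟨hq.aestronglyMeasurable, ?_⟩
  rw [hasFiniteIntegral_iff_norm]
  exact (quot_lint μ hb z hz).trans_lt ENNReal.ofReal_lt_top

lemma two_pi_norm : ‖-(2 / (Real.pi : ℂ))‖ = 2 / Real.pi := by
  rw [norm_neg, norm_div, Complex.norm_real, Real.norm_of_nonneg Real.pi_pos.le]
  simp

lemma T_bound (μ : ℂ → ℂ) (hb : ∀ᵐ ζ : ℂ, ‖μ ζ‖ ≤ 1) (z : ℂ) (hz : 0 < z.im) :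
    2 * z.im * ‖Tderiv μ z‖ ≤ 8 * Real.pi := by
  unfold Tderiv
  rw [norm_mul, two_pi_norm]
  have h := (norm_integral_le_lintegral_norm (μ := volume.restrict {ζ : ℂ | ζ.im < 0})
    (fun ζ => μ ζ / (ζ - z)^3)).trans
    (ENNReal.toReal_le_of_le_ofReal (by positivity) (quot_lint μ hb z hz))
  calc _ ≤ 2 * z.im * (2 / Real.pi * (2 * Real.pi^2 / z.im)) := by gcongr
    _ = _ := by have := Real.pi_pos; field_simp; ring

lemma T_diff (n x₀ x₁ t : ℝ) (hn : 0 < n) (ht : 0 < t) (μ₁ μ₂ : ℂ → ℂ)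
    (hm₁ : Measurable μ₁) (hm₂ : Measurable μ₂)
    (hb₁ : ∀ᵐ ζ : ℂ, ‖μ₁ ζ‖ ≤ 1) (hb₂ : ∀ᵐ ζ : ℂ, ‖μ₂ ζ‖ ≤ 1)
    (he : ∀ᵐ w : ℂ, w ∈ {w : ℂ | w.re ∈ Set.Icc x₀ x₁ ∧
        w.im ∈ Set.Icc (-t) (-(t / n))} → μ₁ w = μ₂ w)
    (z : ℂ) (hz : 0 < z.im) (h0 : x₀ < z.re) (h1 : z.re < x₁) :
    ‖Tderiv μ₁ z - Tderiv μ₂ z‖ ≤ 4 / Real.pi * Kbd n x₀ x₁ t z.re z.im := by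
  have p0 : 0 < z.re - x₀ := by linarith
  have p1 : 0 < x₁ - z.re := by linarith
  have hK : 0 ≤ Kbd n x₀ x₁ t z.re z.im := by unfold Kbd; positivity
  unfold Tderiv
  rw [← mul_sub, norm_mul, two_pi_norm, ← integral_sub (quot_integrable μ₁ hm₁ hb₁ z hz)
    (quot_integrable μ₂ hm₂ hb₂ z hz)]
  have h := (norm_integral_le_lintegral_norm (μ := volume.restrict {ζ : ℂ | ζ.im < 0})
    (fun ζ => μ₁ ζ / (ζ - z)^3 - μ₂ ζ / (ζ - z)^3)).trans
    (ENNReal.toReal_le_of_le_ofReal (b := 2 * Kbd n x₀ x₁ t z.re z.im) (by positivity) ?_)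
  · calc _ ≤ 2 / Real.pi * (2 * Kbd n x₀ x₁ t z.re z.im) := by gcongr
      _ = _ := by ring
  · rw [ENNReal.ofReal_mul zero_le_two]
    refine le_trans ?_ (mul_le_mul_right (kerC_E n x₀ x₁ t hn ht z hz h0 h1) _)
    rw [← lintegral_const_mul _ (kerC_meas z)]
    have hE : MeasurableSet {ζ : ℂ | ζ.im < 0 ∧
        ¬ (ζ.re ∈ Set.Icc x₀ x₁ ∧ ζ.im ∈ Set.Icc (-t) (-(t / n)))} :=
      lhp_meas.inter ((Complex.measurable_re measurableSet_Icc).inter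
        (Complex.measurable_im measurableSet_Icc)).compl
    rw [← lintegral_indicator hE, ← lintegral_indicator lhp_meas]
    refine lintegral_mono_ae ?_
    filter_upwards [hb₁, hb₂, he] with ζ a b c
    by_cases hL : ζ ∈ {ζ : ℂ | ζ.im < 0}
    · rw [indicator_of_mem hL, ← sub_div]
      by_cases hB : ζ.re ∈ Set.Icc x₀ x₁ ∧ ζ.im ∈ Set.Icc (-t) (-(t / n))
      · rw [c hB]; simp
      · have hmem : ζ ∈ {ζ : ℂ | ζ.im < 0 ∧
          ¬ (ζ.re ∈ Set.Icc x₀ x₁ ∧ ζ.im ∈ Set.Icc (-t) (-(t / n)))} := ⟨hL, hB⟩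
        rw [indicator_of_mem hmem]
        refine enorm_quot _ z ζ 2 zero_le_two ((norm_sub_le _ _).trans (by linarith))
    · rw [indicator_of_notMem hL]; exact zero_le

lemma T_meas (μ : ℂ → ℂ) (hm : Measurable μ) : Measurable (Tderiv μ) := by
  unfold Tderiv
  refine Measurable.const_mul ?_ _
  refine StronglyMeasurable.measurable ?_
  refine StronglyMeasurable.integral_prod_right
    (f := fun z ζ : ℂ => μ ζ / (ζ - z)^3) ?_
  apply Measurable.stronglyMeasurable
  unfold Function.uncurry
  fun_prop

lemma half_int0 (c : ℝ) :
    ∫ x in (0:ℝ)..c, x ^ (-(1/2) : ℝ) = 2 * Real.sqrt c := by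
  rw [integral_rpow (Or.inl (by norm_num)), Real.sqrt_eq_rpow]
  norm_num
  ring

lemma half_left (a b : ℝ) (hab : a ≤ b) :
    IntegrableOn (fun x : ℝ => (x - a) ^ (-(1/2) : ℝ)) (Icc a b) ∧
    ∫ x in Icc a b, (x - a) ^ (-(1/2) : ℝ) = 2 * Real.sqrt (b - a) := by
  constructor
  · have h := (intervalIntegral.intervalIntegrable_rpow' (a := 0) (b := b - a)
      (r := (-(1/2) : ℝ)) (by norm_num)).comp_sub_right a
    simp only [zero_add, sub_add_cancel] at h
    exact (intervalIntegrable_iff_integrableOn_Icc_of_le hab).1 h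
  · rw [integral_Icc_eq_integral_Ioc, ← intervalIntegral.integral_of_le hab,
      intervalIntegral.integral_comp_sub_right (fun x : ℝ => x ^ (-(1/2) : ℝ)) a, sub_self,
      half_int0]

lemma half_right (a b : ℝ) (hab : a ≤ b) :
    IntegrableOn (fun x : ℝ => (b - x) ^ (-(1/2) : ℝ)) (Icc a b) ∧
    ∫ x in Icc a b, (b - x) ^ (-(1/2) : ℝ) = 2 * Real.sqrt (b - a) := by
  constructor
  · have h := (intervalIntegral.intervalIntegrable_rpow' (a := 0) (b := b - a)
      (r := (-(1/2) : ℝ)) (by norm_num)).comp_sub_left b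
    simp only [sub_zero, sub_sub_cancel] at h
    exact (intervalIntegrable_iff_integrableOn_Icc_of_le hab).1 h.symm
  · rw [integral_Icc_eq_integral_Ioc, ← intervalIntegral.integral_of_le hab,
      intervalIntegral.integral_comp_sub_left (fun x : ℝ => x ^ (-(1/2) : ℝ)) b, sub_self,
      half_int0]

lemma half_y (s t : ℝ) (hs : 0 < s) (hst : s ≤ t) :
    IntegrableOn (fun y : ℝ => y ^ (-(1/2) : ℝ)) (Icc s t) ∧
    ∫ y in Icc s t, y ^ (-(1/2) : ℝ) ≤ 2 * Real.sqrt t := by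
  obtain ⟨h1, h2⟩ := half_left 0 t (by linarith)
  simp only [sub_zero] at h1 h2
  have hsub : Icc s t ⊆ Icc 0 t := Icc_subset_Icc_left hs.le
  refine ⟨h1.mono_set hsub, ?_⟩
  rw [← h2]
  refine setIntegral_mono_set h1 ?_ hsub.eventuallyLE
  filter_upwards [ae_restrict_mem measurableSet_Icc] with y hy
  exact Real.rpow_nonneg hy.1 _

lemma inv_sq_y (s t : ℝ) (hs : 0 < s) (hst : s ≤ t) :
    IntegrableOn (fun y : ℝ => 1 / y^2) (Icc s t) ∧
    ∫ y in Icc s t, 1 / y^2 ≤ 1 / s := by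
  have ht : 0 < t := by linarith
  constructor
  · refine ContinuousOn.integrableOn_compact isCompact_Icc ?_
    refine continuousOn_const.div (by fun_prop) fun y hy => ?_
    have : 0 < y := lt_of_lt_of_le hs hy.1
    positivity
  · rw [integral_Icc_eq_integral_Ioc, ← intervalIntegral.integral_of_le hst]
    have h := integral_zpow (a := s) (b := t) (n := -2) (Or.inr ⟨by norm_num, by
      rw [uIcc_of_le hst]; intro h; linarith [h.1]⟩)
    have e : (fun y : ℝ => 1 / y^2) = fun y : ℝ => y ^ (-2 : ℤ) := by
      funext y
      rw [zpow_neg, one_div]; rfl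
    rw [e, h]
    norm_num
    have : 0 < t⁻¹ := by positivity
    linarith

lemma Kbd_int (n α x₀ t : ℝ) (hn : 2 ≤ n) (hα : 1 ≤ α) (ht : 0 < t) :
    IntegrableOn (fun p : ℝ × ℝ => Kbd n x₀ (x₀ + α * t) t p.1 p.2)
      (Icc x₀ (x₀ + α * t) ×ˢ Icc (t / n) t) ∧
    ∫ p in (Icc x₀ (x₀ + α * t) ×ˢ Icc (t / n) t), Kbd n x₀ (x₀ + α * t) t p.1 p.2 ≤
      (18 * Real.pi^2 + Real.pi) * (α * t) := by
  have hαt : 0 < α * t := by positivity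
  have hx : x₀ ≤ x₀ + α * t := by linarith
  have hs : 0 < t / n := by positivity
  have hst : t / n ≤ t := div_le_self ht.le (by linarith)
  obtain ⟨l1, l2⟩ := half_left x₀ (x₀ + α * t) hx
  obtain ⟨r1, r2⟩ := half_right x₀ (x₀ + α * t) hx
  obtain ⟨y1, y2⟩ := half_y (t / n) t hs hst
  obtain ⟨q1, q2⟩ := inv_sq_y (t / n) t hs hst
  have o1 : IntegrableOn (fun _ : ℝ => (1:ℝ)) (Icc x₀ (x₀ + α * t)) := by
    exact integrableOn_const (by simp)
  have o2 : IntegrableOn (fun _ : ℝ => (1:ℝ)) (Icc (t / n) t) := by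
    exact integrableOn_const (by simp)
  have v1 : ∫ _ in Icc x₀ (x₀ + α * t), (1:ℝ) = α * t := by
    simp [hαt.le]
  have v2 : ∫ _ in Icc (t / n) t, (1:ℝ) ≤ t := by
    simp [hst, hs.le]
  have e : (fun p : ℝ × ℝ => Kbd n x₀ (x₀ + α * t) t p.1 p.2) = fun p : ℝ × ℝ =>
      2 * Real.pi^2 / t * (1 * 1) + Real.pi * (t / n) * (1 * (1 / p.2^2)) +
      2 * Real.pi^2 * ((p.1 - x₀) ^ (-(1/2) : ℝ) * p.2 ^ (-(1/2) : ℝ)) +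
      2 * Real.pi^2 * ((x₀ + α * t - p.1) ^ (-(1/2) : ℝ) * p.2 ^ (-(1/2) : ℝ)) := by
    funext p; unfold Kbd; ring
  rw [e]
  have i1 := (o1.integrable.mul_prod o2.integrable).const_mul (2 * Real.pi^2 / t)
  have i2 := (o1.integrable.mul_prod q1.integrable).const_mul (Real.pi * (t / n))
  have i3 := (l1.integrable.mul_prod y1.integrable).const_mul (2 * Real.pi^2)
  have i4 := (r1.integrable.mul_prod y1.integrable).const_mul (2 * Real.pi^2)
  unfold IntegrableOn
  rw [Measure.volume_eq_prod, ← Measure.prod_restrict]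
  refine ⟨((i1.add i2).add i3).add i4, ?_⟩
  rw [integral_add ((i1.fun_add i2).fun_add i3) i4, integral_add (i1.fun_add i2) i3, integral_add i1 i2]
  rw [integral_const_mul (2 * Real.pi^2 / t), integral_const_mul (Real.pi * (t / n)),
    integral_const_mul (2 * Real.pi^2), integral_const_mul (2 * Real.pi^2)]
  rw [integral_prod_mul (fun _ : ℝ => (1:ℝ)) (fun _ : ℝ => (1:ℝ)),
    integral_prod_mul (fun _ : ℝ => (1:ℝ)) (fun y : ℝ => 1 / y^2),
    integral_prod_mul (fun x : ℝ => (x - x₀) ^ (-(1/2) : ℝ)) (fun y : ℝ => y ^ (-(1/2) : ℝ)),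
    integral_prod_mul (fun x : ℝ => (x₀ + α * t - x) ^ (-(1/2) : ℝ))
      (fun y : ℝ => y ^ (-(1/2) : ℝ)), l2, r2, v1, add_sub_cancel_left]
  have hpi := Real.pi_pos
  have hsq : Real.sqrt (α * t) * Real.sqrt t ≤ α * t := by
    calc _ ≤ Real.sqrt (α * t) * Real.sqrt (α * t) := by
          gcongr; nlinarith
      _ = _ := Real.mul_self_sqrt hαt.le
  have b1 : 2 * Real.pi^2 / t * (α * t * ∫ _ in Icc (t / n) t, (1:ℝ)) ≤
      2 * Real.pi^2 * (α * t) := by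
    calc _ ≤ 2 * Real.pi^2 / t * (α * t * t) := by gcongr
      _ = _ := by field_simp
  have b2 : Real.pi * (t / n) * (α * t * ∫ y in Icc (t / n) t, 1 / y^2) ≤
      Real.pi * (α * t) := by
    calc _ ≤ Real.pi * (t / n) * (α * t * (1 / (t / n))) := by gcongr
      _ = _ := by field_simp
  have b3 : 2 * Real.pi^2 * (2 * Real.sqrt (α * t) * ∫ y in Icc (t / n) t, y ^ (-(1/2) : ℝ)) ≤
      8 * Real.pi^2 * (α * t) := by
    calc _ ≤ 2 * Real.pi^2 * (2 * Real.sqrt (α * t) * (2 * Real.sqrt t)) := by gcongr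
      _ = 8 * Real.pi^2 * (Real.sqrt (α * t) * Real.sqrt t) := by ring
      _ ≤ _ := by gcongr
  nlinarith

lemma F_integrable (μ : ℂ → ℂ) (hm : Measurable μ) (hb : ∀ᵐ ζ : ℂ, ‖μ ζ‖ ≤ 1)
    (x₀ x₁ s t : ℝ) (hs : 0 < s) :
    IntegrableOn (fun z : ℂ => (2 * z.im * ‖Tderiv μ z‖)^2 / z.im)
      {z : ℂ | z.re ∈ Set.Icc x₀ x₁ ∧ z.im ∈ Set.Icc s t} := by
  have hT := T_meas μ hm
  have hB : IsCompact (Icc x₀ x₁ ×ℂ Icc s t) := isCompact_Icc.reProdIm isCompact_Icc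
  have hF : Measurable (fun z : ℂ => (2 * z.im * ‖Tderiv μ z‖)^2 / z.im) := by
    have h1 : Measurable (fun z : ℂ => ‖Tderiv μ z‖) := hT.norm
    have h2 := Complex.measurable_im
    exact (((h2.const_mul 2).mul h1).pow_const 2).div h2
  refine Measure.integrableOn_of_bounded (M := (8 * Real.pi)^2 / s) hB.measure_lt_top.ne
    hF.aestronglyMeasurable ?_
  filter_upwards [ae_restrict_mem hB.measurableSet] with z hz
  have hz2 : s ≤ z.im := hz.2.1
  have hz3 : 0 < z.im := by linarith
  rw [Real.norm_of_nonneg (by positivity)]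
  exact div_le_div₀ (by positivity)
    (pow_le_pow_left₀ (by positivity) (T_bound μ hb z hz3) 2) hs hz2

lemma ae_re_ne (c : ℝ) : ∀ᵐ z : ℂ, z.re ≠ c := by
  have h : ∀ᵐ p : ℝ × ℝ, p.1 ≠ c := by
    rw [Measure.volume_eq_prod]
    exact Measure.quasiMeasurePreserving_fst.ae ((countable_singleton c).ae_notMem volume)
  exact Complex.volume_preserving_equiv_real_prod.quasiMeasurePreserving.ae h

theorem stmt6 : ∃ C₁ : ℝ, 0 < C₁ ∧
    ∀ n : ℝ, 2 ≤ n → ∀ α : ℝ, 1 ≤ α → ∀ x₀ t : ℝ, 0 < t →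
    ∀ μ₁ μ₂ : ℂ → ℂ, Measurable μ₁ → Measurable μ₂ →
    (∀ᵐ ζ : ℂ, ‖μ₁ ζ‖ ≤ 1) → (∀ᵐ ζ : ℂ, ‖μ₂ ζ‖ ≤ 1) →
    (∀ ζ : ℂ, 0 ≤ ζ.im → μ₁ ζ = 0) → (∀ ζ : ℂ, 0 ≤ ζ.im → μ₂ ζ = 0) →
    (∀ᵐ w : ℂ, w ∈ {w : ℂ | w.re ∈ Set.Icc x₀ (x₀ + α * t) ∧
        w.im ∈ Set.Icc (-t) (-(t / n))} → μ₁ w = μ₂ w) →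
    |(∫ z in {z : ℂ | z.re ∈ Set.Icc x₀ (x₀ + α * t) ∧ z.im ∈ Set.Icc (t / n) t},
          (2 * z.im * ‖Tderiv μ₁ z‖)^2 / z.im) / (α * t * Real.log n) -
      (∫ z in {z : ℂ | z.re ∈ Set.Icc x₀ (x₀ + α * t) ∧ z.im ∈ Set.Icc (t / n) t},
          (2 * z.im * ‖Tderiv μ₂ z‖)^2 / z.im) / (α * t * Real.log n)|
      ≤ C₁ / Real.log n := by
  have hpi := Real.pi_pos
  refine ⟨128 * (18 * Real.pi^2 + Real.pi), by positivity, ?_⟩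
  intro n hn α hα x₀ t ht μ₁ μ₂ hm₁ hm₂ hb₁ hb₂ _ _ he
  have hs : 0 < t / n := by positivity
  have hαt : 0 < α * t := by positivity
  have hlog : 0 < Real.log n := Real.log_pos (by linarith)
  have hf₁ := F_integrable μ₁ hm₁ hb₁ x₀ (x₀ + α * t) (t / n) t hs
  have hf₂ := F_integrable μ₂ hm₂ hb₂ x₀ (x₀ + α * t) (t / n) t hs
  have hB : MeasurableSet {z : ℂ | z.re ∈ Set.Icc x₀ (x₀ + α * t) ∧ z.im ∈ Set.Icc (t / n) t} :=
    (Complex.measurable_re measurableSet_Icc).inter (Complex.measurable_im measurableSet_Icc)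
  obtain ⟨k1, k2⟩ := Kbd_int n α x₀ t hn hα ht
  have hpre : {z : ℂ | z.re ∈ Set.Icc x₀ (x₀ + α * t) ∧ z.im ∈ Set.Icc (t / n) t} =
      Complex.measurableEquivRealProd ⁻¹' (Icc x₀ (x₀ + α * t) ×ˢ Icc (t / n) t) := by
    ext z
    simp only [Complex.measurableEquivRealProd_apply, mem_preimage, mem_prod, Set.mem_ofPred_eq]
  have kc1 : IntegrableOn (fun z : ℂ => Kbd n x₀ (x₀ + α * t) t z.re z.im)
      {z : ℂ | z.re ∈ Set.Icc x₀ (x₀ + α * t) ∧ z.im ∈ Set.Icc (t / n) t} := by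
    rw [hpre]
    exact (Complex.volume_preserving_equiv_real_prod.integrableOn_comp_preimage
      Complex.measurableEquivRealProd.measurableEmbedding).2 k1
  have kc2 : ∫ z in {z : ℂ | z.re ∈ Set.Icc x₀ (x₀ + α * t) ∧ z.im ∈ Set.Icc (t / n) t},
      Kbd n x₀ (x₀ + α * t) t z.re z.im ≤ (18 * Real.pi^2 + Real.pi) * (α * t) := by
    refine le_trans (le_of_eq ?_) k2
    rw [hpre]
    exact Complex.volume_preserving_equiv_real_prod.setIntegral_preimage_emb
      Complex.measurableEquivRealProd.measurableEmbedding
      (fun p : ℝ × ℝ => Kbd n x₀ (x₀ + α * t) t p.1 p.2) _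
  rw [← sub_div, abs_div, abs_of_pos (mul_pos hαt hlog), ← integral_sub hf₁ hf₂]
  have main : |∫ z in {z : ℂ | z.re ∈ Set.Icc x₀ (x₀ + α * t) ∧ z.im ∈ Set.Icc (t / n) t},
      ((2 * z.im * ‖Tderiv μ₁ z‖)^2 / z.im - (2 * z.im * ‖Tderiv μ₂ z‖)^2 / z.im)| ≤
      128 * ((18 * Real.pi^2 + Real.pi) * (α * t)) := by
    rw [← Real.norm_eq_abs]
    refine (norm_integral_le_of_norm_le (kc1.const_mul 128) ?_).trans ?_
    · filter_upwards [ae_restrict_mem hB, ae_restrict_of_ae (ae_re_ne x₀),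
        ae_restrict_of_ae (ae_re_ne (x₀ + α * t))] with z hz n0 n1
      have hy : 0 < z.im := lt_of_lt_of_le hs hz.2.1
      have h0 : x₀ < z.re := lt_of_le_of_ne hz.1.1 (Ne.symm n0)
      have h1 : z.re < x₀ + α * t := lt_of_le_of_ne hz.1.2 n1
      have hd := T_diff n x₀ (x₀ + α * t) t (by linarith) ht μ₁ μ₂ hm₁ hm₂ hb₁ hb₂ he z hy h0 h1
      have t1 := T_bound μ₁ hb₁ z hy
      have t2 := T_bound μ₂ hb₂ z hy
      have hd' := (abs_norm_sub_norm_le (Tderiv μ₁ z) (Tderiv μ₂ z)).trans hd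
      have e : (2 * z.im * ‖Tderiv μ₁ z‖)^2 / z.im - (2 * z.im * ‖Tderiv μ₂ z‖)^2 / z.im =
          2 * ((2 * z.im * ‖Tderiv μ₁ z‖ + 2 * z.im * ‖Tderiv μ₂ z‖) *
            (‖Tderiv μ₁ z‖ - ‖Tderiv μ₂ z‖)) := by
        field_simp
        ring
      rw [e, Real.norm_eq_abs, abs_mul, abs_mul, abs_of_pos (zero_lt_two' ℝ),
        abs_of_nonneg (by positivity : 0 ≤ 2 * z.im * ‖Tderiv μ₁ z‖ + 2 * z.im * ‖Tderiv μ₂ z‖)]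
      calc _ ≤ 2 * ((8 * Real.pi + 8 * Real.pi) *
            (4 / Real.pi * Kbd n x₀ (x₀ + α * t) t z.re z.im)) := by gcongr
        _ = _ := by field_simp; ring
    · rw [integral_const_mul]
      gcongr
  calc _ ≤ 128 * ((18 * Real.pi^2 + Real.pi) * (α * t)) / (α * t * Real.log n) := by gcongr
    _ = _ := by field_simp
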